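/- Let U ⊆ ℂ be a nonempty open connected set and let x, y : ℂ → ℂ be analytic on a neighbourhood of U, such that for every t ∈ U both (x'(t))² + (y'(t))² ≠ 0 and x'(t)·y''(t) − x''(t)·y'(t) ≠ 0 (where ' denotes deriv). Define v(t) := ((x'(t))² + (y'(t))²)·(x'(t)·y'''(t) − x'''(t)·y'(t)) + 3·(x'(t)·x''(t) + y'(t)·y''(t))·(x''(t)·y'(t) − x'(t)·y''(t)). Then v(t) = 0 for all t ∈ U if and only if there exist a, b, c ∈ ℂ with c ≠ 0 such that (x(t) − a)² + (y(t) − b)² = c² for all t ∈ U (i.e. the curve is contained in a complex circle). -/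

import Mathlib

/-!
The centre of curvature of `γ = (x, y)` is `γ + (S / W) • (-y', x')`, where `S = x'² + y'²` and
`W = x'y'' - x''y'`, and its derivative is `(v / W²) • (y', -x')`. As `W ≠ 0` forces `γ' ≠ 0`, the
vertex function `v` vanishes identically iff the centre of curvature is a constant point `p`.
Differentiating `|γ - p|²` twice shows that this happens iff `|γ - p|²` is constant, and the
constant is then `S³ / W²`. Lagrange's identity
`W² + (x'x'' + y'y'')² = (x'² + y'²)(x''² + y''²)` shows that `S` cannot vanish where `v = 0 ≠ W`,
so this constant is nonzero.
-/

theorem exists_ne_zero_and_iff_exists_pow {K : Type*} [Field K] [IsAlgClosed K] {n : ℕ}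
    (hn : 0 < n) {P : K → Prop} : (∃ k, k ≠ 0 ∧ P k) ↔ ∃ c, c ≠ 0 ∧ P (c ^ n) := by
  have pow_surjective : Function.Surjective fun c : K ↦ c ^ n :=
    fun k ↦ IsAlgClosed.exists_pow_nat_eq k hn
  rw [pow_surjective.exists]
  simp only [ne_eq, pow_eq_zero_iff hn.ne']

namespace PlaneCurve

section Pointwise

variable {𝕜 : Type*} [NontriviallyNormedField 𝕜]

/-- The bilinear square `x'² + y'²` of the velocity; over `ℂ` it is the quantity whose zeros are
the isotropic tangents, and no conjugation is involved. -/
noncomputable def speedSq (x y : 𝕜 → 𝕜) (t : 𝕜) : 𝕜 :=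
  deriv x t ^ 2 + deriv y t ^ 2

/-- The determinant `x'y'' - x''y'` of velocity and acceleration, whose zeros are the inflections
of the curve. -/
noncomputable def inflectionFn (x y : 𝕜 → 𝕜) (t : 𝕜) : 𝕜 :=
  deriv x t * deriv (deriv y) t - deriv (deriv x) t * deriv y t

/-- The numerator of the derivative of the curvature, whose zeros are the vertices of the curve. -/
noncomputable def vertexFn (x y : 𝕜 → 𝕜) (t : 𝕜) : 𝕜 :=
  (deriv x t ^ 2 + deriv y t ^ 2) *
      (deriv x t * deriv (deriv (deriv y)) t - deriv (deriv (deriv x)) t * deriv y t) +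
    3 * (deriv x t * deriv (deriv x) t + deriv y t * deriv (deriv y) t) *
      (deriv (deriv x) t * deriv y t - deriv x t * deriv (deriv y) t)

/-- The centre of curvature at parameter `t`. At an inflection the division by zero makes it the
point of the curve itself. -/
noncomputable def evolute (x y : 𝕜 → 𝕜) (t : 𝕜) : 𝕜 × 𝕜 :=
  (x t - deriv y t * (speedSq x y t / inflectionFn x y t),
    y t + deriv x t * (speedSq x y t / inflectionFn x y t))

/-- The bilinear squared distance from `p` to the point of the curve at parameter `t`; the curve
lies on a circle centred at `p` when it is constant. -/
def distSq (x y : 𝕜 → 𝕜) (p : 𝕜 × 𝕜) (t : 𝕜) : 𝕜 :=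
  (x t - p.1) ^ 2 + (y t - p.2) ^ 2

/-- The bilinear product of the velocity with the radius vector from `p`; it vanishes when `p` lies
on the normal line. -/
noncomputable def radialVelocity (x y : 𝕜 → 𝕜) (p : 𝕜 × 𝕜) (t : 𝕜) : 𝕜 :=
  (x t - p.1) * deriv x t + (y t - p.2) * deriv y t

variable {x y : 𝕜 → 𝕜} {t : 𝕜} {p : 𝕜 × 𝕜}

theorem speedSq_ne_zero_of_vertexFn_eq_zero [CharZero 𝕜] (hW : inflectionFn x y t ≠ 0)
    (hv : vertexFn x y t = 0) : speedSq x y t ≠ 0 := by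
  intro hS
  simp only [speedSq, inflectionFn, vertexFn] at hS hW hv
  have velocity_mul_acceleration :
      deriv x t * deriv (deriv x) t + deriv y t * deriv (deriv y) t = 0 := by
    refine (mul_eq_zero.1 ?_).resolve_right (mul_ne_zero three_ne_zero hW)
    linear_combination
      (deriv x t * deriv (deriv (deriv y)) t - deriv (deriv (deriv x)) t * deriv y t) * hS - hv
  refine hW (pow_eq_zero_iff two_ne_zero |>.1 ?_)
  linear_combination (deriv (deriv x) t ^ 2 + deriv (deriv y) t ^ 2) * hS -
    (deriv x t * deriv (deriv x) t + deriv y t * deriv (deriv y) t) * velocity_mul_acceleration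

theorem distSq_evolute : distSq x y (evolute x y t) t =
    speedSq x y t ^ 3 / inflectionFn x y t ^ 2 := by
  simp only [distSq, evolute, speedSq]
  ring

theorem evolute_eq_iff (hW : inflectionFn x y t ≠ 0) :
    evolute x y t = p ↔ radialVelocity x y p t = 0 ∧
      speedSq x y t + (x t - p.1) * deriv (deriv x) t + (y t - p.2) * deriv (deriv y) t = 0 := by
  have evolute_eq_iff_mul : evolute x y t = p ↔
      (x t - p.1) * inflectionFn x y t = deriv y t * speedSq x y t ∧
        (y t - p.2) * inflectionFn x y t = -(deriv x t * speedSq x y t) := by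
    rw [Prod.ext_iff, evolute, ← eq_div_iff hW, ← eq_div_iff hW]
    grind
  rw [evolute_eq_iff_mul, radialVelocity]
  constructor
  · rintro ⟨hx, hy⟩
    simp only [inflectionFn] at hx hy hW
    constructor <;> refine (mul_eq_zero.1 ?_).resolve_right hW
    · linear_combination deriv x t * hx + deriv y t * hy
    · linear_combination deriv (deriv x) t * hx + deriv (deriv y) t * hy
  · rintro ⟨h₁, h₂⟩
    rw [inflectionFn]
    constructor
    · linear_combination deriv (deriv y) t * h₁ - deriv y t * h₂
    · linear_combination deriv x t * h₂ - deriv (deriv x) t * h₁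

theorem hasDerivAt_speedSq (hx : DifferentiableAt 𝕜 (deriv x) t)
    (hy : DifferentiableAt 𝕜 (deriv y) t) :
    HasDerivAt (speedSq x y)
      (2 * (deriv x t * deriv (deriv x) t + deriv y t * deriv (deriv y) t)) t :=
  ((hx.hasDerivAt.fun_pow 2).fun_add (hy.hasDerivAt.fun_pow 2)).congr_deriv (by push_cast; ring)

theorem hasDerivAt_inflectionFn
    (hx : DifferentiableAt 𝕜 (deriv x) t) (hx' : DifferentiableAt 𝕜 (deriv (deriv x)) t)
    (hy : DifferentiableAt 𝕜 (deriv y) t) (hy' : DifferentiableAt 𝕜 (deriv (deriv y)) t) :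
    HasDerivAt (inflectionFn x y)
      (deriv x t * deriv (deriv (deriv y)) t - deriv (deriv (deriv x)) t * deriv y t) t :=
  ((hx.hasDerivAt.fun_mul hy'.hasDerivAt).fun_sub
    (hx'.hasDerivAt.fun_mul hy.hasDerivAt)).congr_deriv (by ring)

theorem hasDerivAt_distSq (hx : DifferentiableAt 𝕜 x t) (hy : DifferentiableAt 𝕜 y t) :
    HasDerivAt (distSq x y p) (2 * radialVelocity x y p t) t :=
  (((hx.hasDerivAt.sub_const p.1).fun_pow 2).fun_add
    ((hy.hasDerivAt.sub_const p.2).fun_pow 2)).congr_deriv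
    (by rw [radialVelocity]; push_cast; ring)

theorem hasDerivAt_radialVelocity
    (hx : DifferentiableAt 𝕜 x t) (hx' : DifferentiableAt 𝕜 (deriv x) t)
    (hy : DifferentiableAt 𝕜 y t) (hy' : DifferentiableAt 𝕜 (deriv y) t) :
    HasDerivAt (radialVelocity x y p)
      (speedSq x y t + (x t - p.1) * deriv (deriv x) t + (y t - p.2) * deriv (deriv y) t) t :=
  (((hx.hasDerivAt.sub_const p.1).fun_mul hx'.hasDerivAt).fun_add
    ((hy.hasDerivAt.sub_const p.2).fun_mul hy'.hasDerivAt)).congr_deriv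
    (by rw [speedSq]; ring)

theorem hasDerivAt_evolute (hx : ∀ n < 3, DifferentiableAt 𝕜 (deriv^[n] x) t)
    (hy : ∀ n < 3, DifferentiableAt 𝕜 (deriv^[n] y) t) (hW : inflectionFn x y t ≠ 0) :
    HasDerivAt (evolute x y)
      ((vertexFn x y t / inflectionFn x y t ^ 2) • (deriv y t, -deriv x t)) t := by
  have hx₀ : DifferentiableAt 𝕜 x t := hx 0 (by norm_num)
  have hx₁ : DifferentiableAt 𝕜 (deriv x) t := hx 1 (by norm_num)
  have hx₂ : DifferentiableAt 𝕜 (deriv (deriv x)) t := hx 2 (by norm_num)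
  have hy₀ : DifferentiableAt 𝕜 y t := hy 0 (by norm_num)
  have hy₁ : DifferentiableAt 𝕜 (deriv y) t := hy 1 (by norm_num)
  have hy₂ : DifferentiableAt 𝕜 (deriv (deriv y)) t := hy 2 (by norm_num)
  have hSW := (hasDerivAt_speedSq hx₁ hy₁).fun_div (hasDerivAt_inflectionFn hx₁ hx₂ hy₁ hy₂) hW
  refine ((hx₀.hasDerivAt.fun_sub (hy₁.hasDerivAt.fun_mul hSW)).prodMk
    (hy₀.hasDerivAt.fun_add (hx₁.hasDerivAt.fun_mul hSW))).congr_deriv ?_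
  ext <;>
  · simp only [Prod.smul_fst, Prod.smul_snd, smul_eq_mul]
    field_simp
    simp only [vertexFn, speedSq, inflectionFn]
    ring

theorem deriv_evolute_eq_zero_iff (hx : ∀ n < 3, DifferentiableAt 𝕜 (deriv^[n] x) t)
    (hy : ∀ n < 3, DifferentiableAt 𝕜 (deriv^[n] y) t) (hW : inflectionFn x y t ≠ 0) :
    deriv (evolute x y) t = 0 ↔ vertexFn x y t = 0 := by
  have normal_ne_zero : (deriv y t, -deriv x t) ≠ 0 := by
    intro h
    obtain ⟨hy', hx'⟩ : deriv y t = 0 ∧ deriv x t = 0 := by simpa using h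
    exact hW (by simp [inflectionFn, hx', hy'])
  rw [(hasDerivAt_evolute hx hy hW).deriv, smul_eq_zero_iff_left normal_ne_zero,
    div_eq_zero_iff, or_iff_left (pow_ne_zero 2 hW)]

end Pointwise

section Global

variable {𝕜 : Type*} [RCLike 𝕜] {U : Set 𝕜} {x y : 𝕜 → 𝕜} {p : 𝕜 × 𝕜}

theorem forall_vertexFn_eq_zero_iff_exists_evolute_eq (hUo : IsOpen U) (hUc : IsPreconnected U)
    (hx : ∀ t ∈ U, ∀ n < 3, DifferentiableAt 𝕜 (deriv^[n] x) t)
    (hy : ∀ t ∈ U, ∀ n < 3, DifferentiableAt 𝕜 (deriv^[n] y) t)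
    (hW : ∀ t ∈ U, inflectionFn x y t ≠ 0) :
    (∀ t ∈ U, vertexFn x y t = 0) ↔ ∃ p, ∀ t ∈ U, evolute x y t = p := by
  have deriv_iff : ∀ t ∈ U, (deriv (evolute x y) t = 0 ↔ vertexFn x y t = 0) :=
    fun t ht ↦ deriv_evolute_eq_zero_iff (hx t ht) (hy t ht) (hW t ht)
  constructor
  · intro hv
    refine hUo.exists_is_const_of_deriv_eq_zero hUc (fun t ht ↦ ?_)
      fun t ht ↦ (deriv_iff t ht).2 (hv t ht)
    exact (hasDerivAt_evolute (hx t ht) (hy t ht)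
      (hW t ht)).differentiableAt.differentiableWithinAt
  · rintro ⟨p, hp⟩ t ht
    have evolute_const : Set.EqOn (evolute x y) (fun _ ↦ p) U := hp
    exact (deriv_iff t ht).1 ((evolute_const.deriv hUo ht).trans (deriv_const t p))

theorem forall_evolute_eq_iff_exists_distSq_eq (hUo : IsOpen U) (hUc : IsPreconnected U)
    (hx : ∀ t ∈ U, ∀ n < 2, DifferentiableAt 𝕜 (deriv^[n] x) t)
    (hy : ∀ t ∈ U, ∀ n < 2, DifferentiableAt 𝕜 (deriv^[n] y) t)
    (hW : ∀ t ∈ U, inflectionFn x y t ≠ 0) :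
    (∀ t ∈ U, evolute x y t = p) ↔ ∃ k, ∀ t ∈ U, distSq x y p t = k := by
  have hasDerivAt_distSq_on : ∀ t ∈ U,
      HasDerivAt (distSq x y p) (2 * radialVelocity x y p t) t := fun t ht ↦
    hasDerivAt_distSq (hx t ht 0 two_pos) (hy t ht 0 two_pos)
  constructor
  · intro hp
    refine hUo.exists_is_const_of_deriv_eq_zero hUc
      (fun t ht ↦ (hasDerivAt_distSq_on t ht).differentiableAt.differentiableWithinAt)
      fun t ht ↦ ?_
    rw [(hasDerivAt_distSq_on t ht).deriv, ((evolute_eq_iff (hW t ht)).1 (hp t ht)).1, mul_zero,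
      Pi.zero_apply]
  · rintro ⟨k, hk⟩
    have distSq_const : Set.EqOn (distSq x y p) (fun _ ↦ k) U := hk
    have radialVelocity_zero : Set.EqOn (radialVelocity x y p) (fun _ ↦ 0) U := fun t ht ↦ by
      simpa [(hasDerivAt_distSq_on t ht).deriv] using distSq_const.deriv hUo ht
    refine fun t ht ↦ (evolute_eq_iff (hW t ht)).2 ⟨radialVelocity_zero ht, ?_⟩
    have hasDerivAt_radial := hasDerivAt_radialVelocity (p := p) (hx t ht 0 two_pos)
      (hx t ht 1 one_lt_two) (hy t ht 0 two_pos) (hy t ht 1 one_lt_two)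
    exact hasDerivAt_radial.deriv.symm.trans
      ((radialVelocity_zero.deriv hUo ht).trans (deriv_const t 0))

end Global

end PlaneCurve

open PlaneCurve in
theorem regular_curve_circle_iff_vertex_function_zero_general {𝕜 : Type*} [RCLike 𝕜] {U : Set 𝕜}
    (hUne : U.Nonempty) (hUo : IsOpen U) (hUc : IsPreconnected U) {x y : 𝕜 → 𝕜}
    (hx : ∀ t ∈ U, ∀ n < 3, DifferentiableAt 𝕜 (deriv^[n] x) t)
    (hy : ∀ t ∈ U, ∀ n < 3, DifferentiableAt 𝕜 (deriv^[n] y) t)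
    (hinfl : ∀ t ∈ U, inflectionFn x y t ≠ 0) :
    (∀ t ∈ U, vertexFn x y t = 0) ↔
      ∃ a b k : 𝕜, k ≠ 0 ∧ ∀ t ∈ U, (x t - a) ^ 2 + (y t - b) ^ 2 = k := by
  have vertexFn_iff := forall_vertexFn_eq_zero_iff_exists_evolute_eq hUo hUc hx hy hinfl
  have evolute_iff (p : 𝕜 × 𝕜) := forall_evolute_eq_iff_exists_distSq_eq (p := p) hUo hUc
    (fun t ht n hn ↦ hx t ht n (hn.trans (by norm_num)))
    (fun t ht n hn ↦ hy t ht n (hn.trans (by norm_num))) hinfl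
  constructor
  · intro hv
    obtain ⟨p, hp⟩ := vertexFn_iff.1 hv
    obtain ⟨k, hk⟩ := (evolute_iff p).1 hp
    refine ⟨p.1, p.2, k, ?_, hk⟩
    obtain ⟨t, ht⟩ := hUne
    rw [← hk t ht, ← hp t ht, distSq_evolute]
    exact div_ne_zero (pow_ne_zero 3 (speedSq_ne_zero_of_vertexFn_eq_zero (hinfl t ht) (hv t ht)))
      (pow_ne_zero 2 (hinfl t ht))
  · rintro ⟨a, b, k, -, hk⟩
    exact vertexFn_iff.2 ⟨(a, b), (evolute_iff (a, b)).2 ⟨k, hk⟩⟩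

/-- **Proposition 2.3(3).** A regular holomorphic plane curve on a nonempty open
connected set `U ⊆ ℂ` whose tangent is nowhere isotropic (`x'² + y'² ≠ 0`) and which
has no inflections (`x'y'' − x''y' ≠ 0`) has identically vanishing vertex function
`v = (x'² + y'²)(x'y''' − x'''y') + 3(x'x'' + y'y'')(x''y' − x'y'')`
if and only if it is contained in a complex circle `(x−a)² + (y−b)² = c²`, `c ≠ 0`. -/
theorem regular_curve_circle_iff_vertex_function_zero
    (U : Set ℂ) (hUne : U.Nonempty) (hUo : IsOpen U) (hUc : IsPreconnected U)
    (x y : ℂ → ℂ) (hx : AnalyticOnNhd ℂ x U) (hy : AnalyticOnNhd ℂ y U)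
    (hiso : ∀ t ∈ U, (deriv x t) ^ 2 + (deriv y t) ^ 2 ≠ 0)
    (hinfl : ∀ t ∈ U, deriv x t * deriv (deriv y) t - deriv (deriv x) t * deriv y t ≠ 0) :
    (∀ t ∈ U,
        ((deriv x t) ^ 2 + (deriv y t) ^ 2) *
            (deriv x t * deriv (deriv (deriv y)) t - deriv (deriv (deriv x)) t * deriv y t) +
          3 * (deriv x t * deriv (deriv x) t + deriv y t * deriv (deriv y) t) *
            (deriv (deriv x) t * deriv y t - deriv x t * deriv (deriv y) t) = 0) ↔
      ∃ a b c : ℂ, c ≠ 0 ∧ ∀ t ∈ U, (x t - a) ^ 2 + (y t - b) ^ 2 = c ^ 2 :=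
  (regular_curve_circle_iff_vertex_function_zero_general hUne hUo hUc
    (fun t ht n _ ↦ (hx.iterated_deriv n t ht).differentiableAt)
    (fun t ht n _ ↦ (hy.iterated_deriv n t ht).differentiableAt) hinfl).trans <|
    exists₂_congr fun _ _ ↦ exists_ne_zero_and_iff_exists_pow two_pos
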